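/- For −1 < γ < 0, λ > 0, and δ ∈ ℝ, the function f(t) = t^{δ−1}·W_{γ,δ}(−λt^γ) for t > 0 has Laplace transform L[f](s) = s^{−δ}·exp(−λ s^{−γ}) for s > 0. -/

import Mathlib

/-- The Wright function `W_{γ,δ}(z) = ∑_{k=0}^∞ zᵏ/(k!Γ(γk+δ))` (real version). -/
noncomputable def wright (γ δ : ℝ) (z : ℝ) : ℝ :=
  ∑' k : ℕ, z ^ k / ((k.factorial : ℝ) * Real.Gamma (γ * k + δ))

/-!
Write `a = -γ` and invert the Laplace transform along the two rays `arg z = ±η`, where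
`π / 2 < η < min (π, π / (2 a))`, so that `exp (t z)` and `exp (-λ z ^ a)` both decay there. Put
`z = exp w`, so that powers of `z` become entire functions of `w` and deforming a ray means
shifting a horizontal line.

The transform `z ^ (-δ) exp (-λ z ^ a)` may be too singular at `0` for this, so its first `N` power
terms, `N` being the least with `δ - 1 / 2 ≤ a N`, are transformed directly by the Gamma integral.
The remainder `F` satisfies `z F z = O(|z| ^ (1 / 2))` on the whole sector `|arg z| ≤ η`. Fubini
turns the Laplace transform of its inverse into the Cauchy integral of `F` over the rays, which is
`F s`: after subtracting the multiple of `z ^ (-1 / 2)` that agrees with `F` at `s` the integrand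
has no pole, and for `z ^ (-1 / 2)` the transform is known.

The inverse of the remainder itself is computed by integrating the exponential series term by term
along the rays. Hankel's formula for `1 / Γ` identifies the terms as those of the Wright series.
-/

open MeasureTheory Filter Set Asymptotics Topology
open Complex (I)
open scoped Real Complex Nat

section ExponentialDecay

variable {E : Type*} [NormedAddCommGroup E]

lemma integrable_exp_neg_mul_abs {κ : ℝ} (hκ : 0 < κ) :
    Integrable fun x : ℝ => rexp (-κ * |x|) := by
  refine .of_integral_ne_zero ?_
  rw [integral_comp_abs (f := fun x => rexp (-κ * x)),
    integral_exp_mul_Ioi (neg_neg_of_pos hκ)]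
  simp [hκ.ne']

lemma integrable_of_norm_le_exp_neg_mul_abs {f : ℝ → E} {C κ : ℝ} (hκ : 0 < κ)
    (hf : Continuous f) (hbound : ∀ᶠ x in cocompact ℝ, ‖f x‖ ≤ C * rexp (-κ * |x|)) :
    Integrable f :=
  hf.locallyIntegrable.integrable_of_isBigO_cocompact
    (.of_bound C <| hbound.mono fun x hx => by rwa [Real.norm_of_nonneg (Real.exp_pos _).le])
    ((integrable_exp_neg_mul_abs hκ).integrableAtFilter _)

theorem integral_horizontalLine_eq [NormedSpace ℂ E] [CompleteSpace E] {H : ℂ → E}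
    {a b C κ : ℝ} (hab : a ≤ b) (hκ : 0 < κ) (hH : DifferentiableOn ℂ H (Complex.im ⁻¹' Icc a b))
    (hbound : ∀ᶠ x : ℝ in cocompact ℝ, ∀ y ∈ Icc a b,
      ‖H (x + y * I)‖ ≤ C * rexp (-κ * |x|)) :
    ∫ x : ℝ, H (x + a * I) = ∫ x : ℝ, H (x + b * I) := by
  have tendsto_line : ∀ y ∈ Icc a b, Tendsto (fun T : ℝ => ∫ x in -T..T, H (x + y * I)) atTop
      (𝓝 (∫ x : ℝ, H (x + y * I))) := by
    intro y hy
    have hcont : Continuous fun x : ℝ => H (x + y * I) :=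
      hH.continuousOn.comp_continuous (by fun_prop) fun x => by simpa using hy
    exact intervalIntegral_tendsto_integral
      (integrable_of_norm_le_exp_neg_mul_abs hκ hcont (hbound.mono fun x hx => hx y hy))
      tendsto_neg_atTop_atBot tendsto_id
  have tendsto_side : Tendsto (fun x : ℝ => ∫ y in a..b, H (x + y * I)) (cocompact ℝ) (𝓝 0) := by
    have hdecay : Tendsto (fun x : ℝ => C * rexp (-κ * |x|) * |b - a|) (cocompact ℝ) (𝓝 0) := by
      have := Real.tendsto_exp_atBot.comp
        ((tendsto_norm_cocompact_atTop (E := ℝ)).const_mul_atTop_of_neg (neg_neg_of_pos hκ))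
      simpa using! (this.const_mul C).mul_const |b - a|
    refine squeeze_zero_norm' (hbound.mono fun x hx => ?_) hdecay
    refine intervalIntegral.norm_integral_le_of_norm_le_const fun y hy => hx y ?_
    exact Ioc_subset_Icc_self (uIoc_of_le hab ▸ hy)
  have cauchy (T : ℝ) : (∫ x in -T..T, H (x + a * I)) - (∫ x in -T..T, H (x + b * I)) =
      I • (∫ y in a..b, H ((-T : ℝ) + y * I)) - I • ∫ y in a..b, H (T + y * I) := by
    have hrect := Complex.integral_boundary_rect_eq_zero_of_differentiableOn H ⟨-T, a⟩ ⟨T, b⟩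
      (hH.mono fun z hz => by simpa [uIcc_of_le hab] using hz.2)
    rw [← sub_eq_zero, ← hrect]
    abel
  have hlim : Tendsto (fun T : ℝ => I • (∫ y in a..b, H ((-T : ℝ) + y * I)) -
      I • ∫ y in a..b, H (T + y * I)) atTop (𝓝 0) := by
    have hleft := tendsto_side.comp (tendsto_neg_atTop_atBot.mono_right atBot_le_cocompact)
    have hright := tendsto_side.mono_left atTop_le_cocompact
    simpa using! (hleft.const_smul I).sub (hright.const_smul I)
  exact sub_eq_zero.1 <| tendsto_nhds_unique
    ((tendsto_line a (left_mem_Icc.2 hab)).sub (tendsto_line b (right_mem_Icc.2 hab)))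
    (hlim.congr fun T => (cauchy T).symm)

lemma eventually_exp_le_exp_neg_mul_abs {a b : ℝ} (ha : 0 < a) (ha1 : a < 1) (hb : 0 < b)
    (l μ : ℝ) :
    ∀ᶠ x in cocompact ℝ, rexp (μ * x + l * rexp (a * x) - b * rexp x) ≤
      rexp |l| * rexp (-μ * |x|) := by
  rw [cocompact_eq_atBot_atTop, eventually_sup]
  constructor
  · filter_upwards [eventually_le_atBot 0] with x hx
    rw [← Real.exp_add, Real.exp_le_exp, abs_of_nonpos hx]
    have hl : l * rexp (a * x) ≤ |l| :=
      calc l * rexp (a * x) ≤ |l| * rexp (a * x) := by gcongr; exact le_abs_self l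
        _ ≤ |l| := mul_le_of_le_one_right (abs_nonneg l)
          (Real.exp_le_one_iff.2 (mul_nonpos_of_nonneg_of_nonpos ha.le hx))
    linarith [mul_pos hb (Real.exp_pos x)]
  · have hlin : (fun x : ℝ => 2 * μ * x) =o[atTop] rexp := by
      simpa using! (Real.isLittleO_pow_exp_atTop (n := 1)).const_mul_left (2 * μ)
    have hexp : (fun x => l * rexp (a * x)) =o[atTop] rexp := by
      refine IsLittleO.const_mul_left (Real.isLittleO_exp_comp_exp_comp.2 ?_) l
      exact (tendsto_id.const_mul_atTop (sub_pos.2 ha1)).congr fun x => by simp; ring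
    filter_upwards [eventually_ge_atTop 0, (hlin.add hexp).bound hb] with x hx hle
    rw [← Real.exp_add, Real.exp_le_exp, abs_of_nonneg hx]
    rw [Real.norm_of_nonneg (Real.exp_pos x).le] at hle
    linarith [(le_abs_self _).trans hle, abs_nonneg l]

end ExponentialDecay

section HankelIntegral

/-- The Hankel (Bromwich) integral inverting the Laplace transform, taken over the two rays
`arg z = ±η` in the logarithmic coordinate `z = exp w`, where `G w = z * F z` stands for the
transform `F` to be inverted. For `G` real on the real axis the two rays contribute conjugate
values, so that only the imaginary part of the upper one is recorded. -/
noncomputable def hankel (η : ℝ) (G : ℂ → ℂ) (t : ℝ) : ℝ :=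
  π⁻¹ * (∫ x : ℝ, cexp (t * cexp (x + η * I)) * G (x + η * I)).im

lemma re_exp_add_mul_I (x y : ℝ) : (cexp (x + y * I)).re = rexp x * Real.cos y := by
  simp [Complex.exp_re]

lemma norm_exp_mul_add_mul_I (m x y : ℝ) : ‖cexp (m * (x + y * I))‖ = rexp (m * x) := by
  simp [Complex.norm_exp]

lemma norm_exp_mul_exp_add_mul_I (t x y : ℝ) :
    ‖cexp (t * cexp (x + y * I))‖ = rexp (t * Real.cos y * rexp x) := by
  rw [Complex.norm_exp, Complex.re_ofReal_mul, re_exp_add_mul_I, mul_assoc, mul_comm (Real.cos y)]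

lemma integral_Ioi_eq_integral_exp_smul {F : Type*} [NormedAddCommGroup F] [NormedSpace ℝ F]
    (g : ℝ → F) : ∫ r in Ioi (0 : ℝ), g r = ∫ x : ℝ, rexp x • g (rexp x) := by
  simpa [Real.range_exp] using integral_image_eq_integral_abs_deriv_smul MeasurableSet.univ
    (fun x _ => (Real.hasDerivAt_exp x).hasDerivWithinAt) Real.exp_injective.injOn g

lemma integral_exp_mul_exp_neg_mul_exp {μ t : ℝ} (hμ : 0 < μ) (ht : 0 < t) :
    ∫ x : ℝ, rexp (μ * x) * rexp (-t * rexp x) = t ^ (-μ) * Real.Gamma μ := by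
  rw [Real.rpow_neg ht.le, ← Real.inv_rpow ht.le, inv_eq_one_div,
    ← Real.integral_rpow_mul_exp_neg_mul_Ioi hμ ht, integral_Ioi_eq_integral_exp_smul]
  refine integral_congr_ae (.of_forall fun x => ?_)
  simp only [smul_eq_mul, ← Real.exp_mul, ← Real.exp_add]
  ring_nf

lemma Gamma_mul_sin_pi_mul {μ : ℝ} (hμ : 0 < μ) :
    Real.Gamma μ * Real.sin (π * μ) = π / Real.Gamma (1 - μ) := by
  have hΓ := (Real.Gamma_pos_of_pos hμ).ne'
  have reflection := Real.Gamma_mul_Gamma_one_sub μ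
  rcases eq_or_ne (Real.sin (π * μ)) 0 with hsin | hsin
  · have : Real.Gamma (1 - μ) = 0 := by simpa [hsin, hΓ] using reflection
    simp [hsin, this]
  · have : Real.Gamma (1 - μ) ≠ 0 :=
      right_ne_zero_of_mul (reflection ▸ div_ne_zero Real.pi_ne_zero hsin)
    rw [eq_div_iff hsin] at reflection
    rw [eq_div_iff this]
    linear_combination reflection

lemma hankel_pi_exp {μ t : ℝ} (hμ : 0 < μ) (ht : 0 < t) :
    hankel π (fun w => cexp (μ * w)) t = t ^ (-μ) / Real.Gamma (1 - μ) := by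
  have integrand (x : ℝ) : cexp (t * cexp (x + π * I)) * cexp (μ * (x + π * I)) =
      ((rexp (μ * x) * rexp (-t * rexp x) : ℝ) : ℂ) * cexp ((π * μ : ℝ) * I) := by
    rw [Complex.exp_add_pi_mul_I]
    push_cast
    simp only [← Complex.exp_add]
    ring_nf
  simp only [hankel, integrand]
  rw [integral_mul_const, integral_complex_ofReal, integral_exp_mul_exp_neg_mul_exp hμ ht,
    Complex.im_ofReal_mul, Complex.exp_ofReal_mul_I_im, mul_assoc, Gamma_mul_sin_pi_mul hμ]
  field_simp

variable {η t : ℝ}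

lemma hankel_exp_eq_hankel_pi {μ : ℝ} (hμ : 0 < μ) (ht : 0 < t) (hη : π / 2 < η) (hηπ : η ≤ π) :
    hankel η (fun w => cexp (μ * w)) t = hankel π (fun w => cexp (μ * w)) t := by
  have hcos : Real.cos η < 0 := Real.cos_neg_of_pi_div_two_lt_of_lt hη (by linarith [Real.pi_pos])
  have hb : 0 < -(t * Real.cos η) := neg_pos.2 (mul_neg_of_pos_of_neg ht hcos)
  have hbound : ∀ᶠ x : ℝ in cocompact ℝ, ∀ y ∈ Icc η π,
      ‖cexp (t * cexp (x + y * I)) * cexp (μ * (x + y * I))‖ ≤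
        rexp |0| * rexp (-μ * |x|) := by
    filter_upwards [eventually_exp_le_exp_neg_mul_abs one_half_pos one_half_lt_one hb 0 μ]
      with x hx y hy
    refine le_trans ?_ hx
    have hcos_le : Real.cos y ≤ Real.cos η :=
      Real.cos_le_cos_of_nonneg_of_le_pi (by linarith [Real.pi_pos]) hy.2 hy.1
    have : t * Real.cos y * rexp x ≤ t * Real.cos η * rexp x := by gcongr
    rw [norm_mul, norm_exp_mul_exp_add_mul_I, norm_exp_mul_add_mul_I, ← Real.exp_add]
    gcongr
    linarith
  unfold hankel
  rw [integral_horizontalLine_eq (H := fun w => cexp (t * cexp w) * cexp (μ * w)) hηπ hμ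
    (by fun_prop) hbound]

lemma hankel_exp {μ : ℝ} (hμ : 0 < μ) (ht : 0 < t) (hη : π / 2 < η) (hηπ : η ≤ π) :
    hankel η (fun w => cexp (μ * w)) t = t ^ (-μ) / Real.Gamma (1 - μ) := by
  rw [hankel_exp_eq_hankel_pi hμ ht hη hηπ, hankel_pi_exp hμ ht]

end HankelIntegral

section LaplaceTransform

/-- The Laplace integral of `f` at `s` converges absolutely and has the value `F`. Integrability is
part of the notion because the integral of a non-integrable function is `0`. -/
structure HasLaplace (f : ℝ → ℝ) (s F : ℝ) : Prop where
  integrableOn : IntegrableOn (fun t => rexp (-s * t) * f t) (Ioi 0)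
  integral_eq : ∫ t in Ioi (0 : ℝ), rexp (-s * t) * f t = F

namespace HasLaplace

variable {f g : ℝ → ℝ} {s F F' : ℝ}

lemma congr (hf : HasLaplace f s F) (hfg : EqOn f g (Ioi 0)) : HasLaplace g s F := by
  have heq : EqOn (fun t => rexp (-s * t) * f t) (fun t => rexp (-s * t) * g t) (Ioi 0) :=
    fun t ht => by simp only [hfg ht]
  exact ⟨hf.integrableOn.congr_fun heq measurableSet_Ioi,
    (setIntegral_congr_fun measurableSet_Ioi heq).symm.trans hf.integral_eq⟩

lemma const_mul (c : ℝ) (hf : HasLaplace f s F) : HasLaplace (fun t => c * f t) s (c * F) := by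
  refine ⟨?_, ?_⟩ <;> simp only [mul_left_comm _ c]
  · exact hf.integrableOn.const_mul c
  · rw [integral_const_mul, hf.integral_eq]

lemma add (hf : HasLaplace f s F) (hg : HasLaplace g s F') :
    HasLaplace (fun t => f t + g t) s (F + F') := by
  refine ⟨?_, ?_⟩ <;> simp only [mul_add]
  · exact hf.integrableOn.add hg.integrableOn
  · rw [integral_add hf.integrableOn hg.integrableOn, hf.integral_eq, hg.integral_eq]

lemma sum {ι : Type*} {u : Finset ι} {f : ι → ℝ → ℝ} {F : ι → ℝ}
    (hf : ∀ i ∈ u, HasLaplace (f i) s (F i)) :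
    HasLaplace (fun t => ∑ i ∈ u, f i t) s (∑ i ∈ u, F i) := by
  refine ⟨?_, ?_⟩ <;> simp only [Finset.mul_sum]
  · exact integrable_finsetSum u fun i hi => (hf i hi).integrableOn
  · rw [integral_finsetSum u fun i hi => (hf i hi).integrableOn]
    exact Finset.sum_congr rfl fun i hi => (hf i hi).integral_eq

lemma rpow {μ : ℝ} (hμ : 0 < μ) (hs : 0 < s) :
    HasLaplace (fun t => t ^ (μ - 1) / Real.Gamma μ) s (s ^ (-μ)) := by
  have hΓ := Real.Gamma_pos_of_pos hμ
  have hval : ∫ t in Ioi (0 : ℝ), rexp (-s * t) * (t ^ (μ - 1) / Real.Gamma μ) = s ^ (-μ) := by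
    simp only [mul_div_left_comm (rexp _), mul_div_assoc']
    rw [integral_div]
    simp only [neg_mul]
    rw [Real.integral_rpow_mul_exp_neg_mul_Ioi hμ hs, mul_div_cancel_right₀ _ hΓ.ne', one_div,
      Real.inv_rpow hs.le, Real.rpow_neg hs.le]
  exact ⟨.of_integral_ne_zero (hval ▸ (Real.rpow_pos_of_pos hs _).ne'), hval⟩

end HasLaplace

lemma integrable_exp_mul_prod {z g : ℝ → ℂ} (hz : Continuous z) (hg : Continuous g)
    (hre : ∀ x, (z x).re < 0) (hint : Integrable fun x => ‖g x‖ / (z x).re) :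
    Integrable (fun p : ℝ × ℝ => cexp (z p.2 * p.1) * g p.2)
      ((volume.restrict (Ioi 0)).prod volume) := by
  have integral_norm (x : ℝ) :
      ∫ t in Ioi (0 : ℝ), ‖cexp (z x * t) * g x‖ = -(‖g x‖ / (z x).re) := by
    simp only [norm_mul, Complex.norm_exp, Complex.re_mul_ofReal]
    rw [integral_mul_const, integral_exp_mul_Ioi (hre x)]
    simp
    ring
  refine (integrable_prod_iff' (by fun_prop : Continuous _).aestronglyMeasurable).2 ⟨?_, ?_⟩
  · exact .of_forall fun x => (integrableOn_exp_mul_complex_Ioi (hre x) 0).mul_const (g x)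
  · simp only [integral_norm]
    exact hint.neg

lemma integral_Ioi_integral_exp_mul {z g : ℝ → ℂ} (hz : Continuous z) (hg : Continuous g)
    (hre : ∀ x, (z x).re < 0) (hint : Integrable fun x => ‖g x‖ / (z x).re) :
    ∫ t in Ioi (0 : ℝ), ∫ x, cexp (z x * t) * g x = ∫ x, g x / -z x := by
  rw [integral_integral_swap (integrable_exp_mul_prod hz hg hre hint)]
  refine integral_congr_ae (.of_forall fun x => ?_)
  simp only
  rw [integral_mul_const, integral_exp_mul_complex_Ioi (hre x)]
  simp
  ring

end LaplaceTransform

section CauchyIntegral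

/-- The Laplace transform of `hankel η G`, computed under the integral sign: the Cauchy integral
of `F z = G (log z) / z` over the rays `arg z = ±η`, taken in the logarithmic coordinate. As in
`hankel`, the lower ray contributes the conjugate of the upper one. -/
noncomputable def cauchyIntegral (η : ℝ) (G : ℂ → ℂ) (s : ℝ) : ℝ :=
  π⁻¹ * (∫ x : ℝ, G (x + η * I) / (s - cexp (x + η * I))).im

/-- The functions `G w = z * F z`, `z = exp w`, for which the Hankel integral over the rays
`arg z = ±η` inverts the Laplace transform: entire, real on the real axis, and `O(|z| ^ (1 / 2))`
on the sector `0 ≤ arg z ≤ η`. -/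
structure HankelAdmissible (η : ℝ) (G : ℂ → ℂ) : Prop where
  differentiable : Differentiable ℂ G
  im_ofReal : ∀ x : ℝ, (G x).im = 0
  isBigO : G =O[𝓟 (Complex.im ⁻¹' Icc 0 η)] fun w => rexp (w.re / 2)

lemma exp_half_div_le {s c : ℝ} (hs : 0 < s) (hc : 0 < c) (x : ℝ) :
    rexp (x / 2) / (s + c * rexp x) ≤ (min s c)⁻¹ * rexp (-(1 / 2) * |x|) := by
  have : 0 < min s c := lt_min hs hc
  have numerator : rexp (x / 2) ≤ rexp (-(1 / 2) * |x|) * (1 + rexp x) := by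
    rcases le_total x 0 with hx | hx
    · have : rexp (x / 2) = rexp (-(1 / 2) * |x|) := by rw [abs_of_nonpos hx]; ring_nf
      exact this ▸ le_mul_of_one_le_right (Real.exp_pos _).le (by linarith [Real.exp_pos x])
    · have : rexp (x / 2) = rexp (-(1 / 2) * |x|) * rexp x := by
        rw [abs_of_nonneg hx, ← Real.exp_add]; ring_nf
      rw [this]
      gcongr
      linarith
  have denominator : min s c * (1 + rexp x) ≤ s + c * rexp x := by
    rw [mul_add, mul_one]
    gcongr
    exacts [min_le_left s c, min_le_right s c]
  calc rexp (x / 2) / (s + c * rexp x)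
      ≤ rexp (-(1 / 2) * |x|) * (1 + rexp x) / (min s c * (1 + rexp x)) := by gcongr
    _ = (min s c)⁻¹ * rexp (-(1 / 2) * |x|) := by field_simp

lemma eventually_le_norm_sub_exp {s : ℝ} (hs : 0 < s) :
    ∀ᶠ x : ℝ in cocompact ℝ, ∀ y : ℝ, s / 4 + 1 / 4 * rexp x ≤ ‖s - cexp (x + y * I)‖ := by
  have reverse_triangle (x y : ℝ) : |s - rexp x| ≤ ‖s - cexp (x + y * I)‖ := by
    simpa [Complex.norm_exp, abs_of_pos hs] using
      abs_norm_sub_norm_le (s : ℂ) (cexp (x + y * I))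
  rw [cocompact_eq_atBot_atTop, eventually_sup]
  constructor
  · filter_upwards [Real.tendsto_exp_atBot.eventually_lt_const (half_pos hs)] with x hx y
    linarith [reverse_triangle x y, le_abs_self (s - rexp x)]
  · filter_upwards [Real.tendsto_exp_atTop.eventually_ge_atTop (2 * s)] with x hx y
    linarith [reverse_triangle x y, neg_abs_le (s - rexp x)]

lemma log_eq_of_exp_eq {s : ℝ} {w : ℂ} (hs : 0 < s) (hw₀ : 0 ≤ w.im) (hw : w.im < 2 * π)
    (h : cexp w = s) : w = Real.log s := by
  have hexp : cexp w = cexp (Real.log s) := by rw [h, ← Complex.ofReal_exp, Real.exp_log hs]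
  obtain ⟨n, hn⟩ := Complex.exp_eq_exp_iff_exists_int.1 hexp
  have him : w.im = n * (2 * π) := by rw [hn]; simp
  have hn₀ : n = 0 := by
    have hlower : (-1 : ℝ) < n := by nlinarith [Real.pi_pos]
    have hupper : (n : ℝ) < 1 := by nlinarith [Real.pi_pos]
    norm_cast at hlower hupper
    omega
  simpa [hn₀] using hn

lemma re_exp_sub (s x y : ℝ) : (cexp (x + y * I) - s).re = -(s + -Real.cos y * rexp x) := by
  rw [Complex.sub_re, re_exp_add_mul_I, Complex.ofReal_re]
  ring

lemma add_neg_cos_mul_exp_pos {s y : ℝ} (hs : 0 < s) (hy : Real.cos y < 0) (x : ℝ) :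
    0 < s + -Real.cos y * rexp x :=
  add_pos hs (mul_pos (neg_pos.2 hy) (Real.exp_pos x))

lemma re_exp_sub_neg {s y : ℝ} (hs : 0 < s) (hy : Real.cos y < 0) (x : ℝ) :
    (cexp (x + y * I) - s).re < 0 :=
  re_exp_sub s x y ▸ neg_neg_of_pos (add_neg_cos_mul_exp_pos hs hy x)

lemma sub_exp_ne_zero {s y : ℝ} (hs : 0 < s) (hy : Real.cos y < 0) (x : ℝ) :
    (s : ℂ) - cexp (x + y * I) ≠ 0 := fun h => by
  simpa [sub_eq_zero.1 h] using re_exp_sub_neg hs hy x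

lemma exists_differentiableOn_eq_div {f g : ℂ → ℂ} {w₀ : ℂ} {S : Set ℂ} (hf : Differentiable ℂ f)
    (hg : Differentiable ℂ g) (hf₀ : f w₀ = 0) (hg₀ : g w₀ = 0) (hg' : deriv g w₀ ≠ 0)
    (hS : ∀ w ∈ S, g w = 0 → w = w₀) :
    ∃ H, DifferentiableOn ℂ H S ∧ ∀ w ≠ w₀, H w = f w / g w := by
  have differentiable_dslope {h : ℂ → ℂ} (hh : Differentiable ℂ h) :
      Differentiable ℂ (dslope h w₀) :=
    differentiableOn_univ.1 <|
      (Complex.differentiableOn_dslope univ_mem).2 hh.differentiableOn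
  refine ⟨fun w => dslope f w₀ w / dslope g w₀ w, fun w hw => ?_, fun w hw => ?_⟩
  · refine ((differentiable_dslope hf w).div (differentiable_dslope hg w)
      ?_).differentiableWithinAt
    rcases eq_or_ne w w₀ with rfl | hne
    · rwa [dslope_same]
    · rw [dslope_of_ne _ hne, slope_def_field, hg₀, sub_zero]
      exact div_ne_zero (fun h => hne (hS w hw h)) (sub_ne_zero.2 hne)
  · simp only [dslope_of_ne _ hw]
    rw [slope_def_field, slope_def_field, hf₀, hg₀,
      sub_zero, sub_zero, div_div_div_cancel_right₀ (sub_ne_zero.2 hw)]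

lemma im_integral_eq_zero {f : ℝ → ℂ} (hf : ∀ᵐ x, (f x).im = 0) : (∫ x, f x).im = 0 := by
  have hre : f =ᵐ[volume] fun x => ((f x).re : ℂ) :=
    hf.mono fun x hx => Complex.ext (by simp) (by simp [hx])
  rw [integral_congr_ae hre, integral_complex_ofReal, Complex.ofReal_im]

namespace HankelAdmissible

variable {η s : ℝ} {G K : ℂ → ℂ}

lemma sub (hG : HankelAdmissible η G) (hK : HankelAdmissible η K) :
    HankelAdmissible η (fun w => G w - K w) where
  differentiable := hG.differentiable.sub hK.differentiable
  im_ofReal x := by simp [hG.im_ofReal, hK.im_ofReal]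
  isBigO := hG.isBigO.sub hK.isBigO

lemma const_mul (c : ℝ) (hG : HankelAdmissible η G) : HankelAdmissible η (fun w => c * G w) where
  differentiable := hG.differentiable.const_mul (c : ℂ)
  im_ofReal x := by simp [hG.im_ofReal]
  isBigO := hG.isBigO.const_mul_left (c : ℂ)

lemma exp_half (η : ℝ) : HankelAdmissible η (fun w => cexp ((1 / 2 : ℝ) * w)) where
  differentiable := by fun_prop
  im_ofReal x := by rw [← Complex.ofReal_mul, ← Complex.ofReal_exp, Complex.ofReal_im]
  isBigO := .of_norm_le fun w => by
    rw [Complex.norm_exp, Complex.re_ofReal_mul, one_div_mul_eq_div]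

lemma continuous_line (hG : HankelAdmissible η G) (y : ℝ) :
    Continuous fun x : ℝ => G (x + y * I) :=
  hG.differentiable.continuous.comp (by fun_prop)

lemma exists_norm_div_le (hG : HankelAdmissible η G) {c : ℝ} (hs : 0 < s) (hc : 0 < c) :
    ∃ C, ∀ x : ℝ, ∀ y ∈ Icc 0 η,
      ‖G (x + y * I)‖ / (s + c * rexp x) ≤ C * rexp (-(1 / 2) * |x|) := by
  obtain ⟨C, hC, hbound⟩ := hG.isBigO.exists_pos
  refine ⟨C * (min s c)⁻¹, fun x y hy => ?_⟩
  have hle : ‖G (x + y * I)‖ ≤ C * rexp (x / 2) := by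
    simpa [abs_of_pos] using isBigOWith_principal.1 hbound (x + y * I) (by simpa using hy)
  calc ‖G (x + y * I)‖ / (s + c * rexp x) ≤ C * rexp (x / 2) / (s + c * rexp x) := by gcongr
    _ = C * (rexp (x / 2) / (s + c * rexp x)) := mul_div_assoc ..
    _ ≤ C * ((min s c)⁻¹ * rexp (-(1 / 2) * |x|)) := by gcongr; exact exp_half_div_le hs hc x
    _ = C * (min s c)⁻¹ * rexp (-(1 / 2) * |x|) := (mul_assoc ..).symm

lemma exists_eventually_norm_div_le (hG : HankelAdmissible η G) (hs : 0 < s) :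
    ∃ C, ∀ᶠ x : ℝ in cocompact ℝ, ∀ y ∈ Icc 0 η,
      ‖G (x + y * I) / (s - cexp (x + y * I))‖ ≤ C * rexp (-(1 / 2) * |x|) := by
  obtain ⟨C, hC⟩ := hG.exists_norm_div_le (s := s / 4) (c := 1 / 4) (by positivity) (by positivity)
  refine ⟨C, (eventually_le_norm_sub_exp hs).mono fun x hx y hy => le_trans ?_ (hC x y hy)⟩
  rw [norm_div]
  gcongr
  exact hx y

lemma integrable_div_sub_exp (hG : HankelAdmissible η G) (hs : 0 < s) (hη : 0 ≤ η)
    (hcos : Real.cos η < 0) : Integrable fun x : ℝ => G (x + η * I) / (s - cexp (x + η * I)) := by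
  obtain ⟨C, hC⟩ := hG.exists_eventually_norm_div_le hs
  refine integrable_of_norm_le_exp_neg_mul_abs one_half_pos ?_
    (hC.mono fun x hx => hx η (right_mem_Icc.2 hη))
  refine (hG.continuous_line η).div (by fun_prop) (sub_exp_ne_zero hs hcos)

lemma cauchyIntegral_sub_const_mul (hG : HankelAdmissible η G) (hK : HankelAdmissible η K)
    (hs : 0 < s) (hη : 0 ≤ η) (hcos : Real.cos η < 0) (c : ℝ) :
    cauchyIntegral η (fun w => G w - c * K w) s =
      cauchyIntegral η G s - c * cauchyIntegral η K s := by
  simp only [cauchyIntegral, sub_div, mul_div_assoc]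
  rw [integral_sub (hG.integrable_div_sub_exp hs hη hcos)
    ((hK.integrable_div_sub_exp hs hη hcos).const_mul _), integral_const_mul, Complex.sub_im,
    Complex.im_ofReal_mul]
  ring

lemma integrable_norm_div_re (hG : HankelAdmissible η G) (hs : 0 < s) (hη : 0 ≤ η)
    (hcos : Real.cos η < 0) :
    Integrable fun x : ℝ => ‖G (x + η * I)‖ / (cexp (x + η * I) - s).re := by
  obtain ⟨C, hC⟩ := hG.exists_norm_div_le hs (neg_pos.2 hcos)
  refine integrable_of_norm_le_exp_neg_mul_abs (C := C) one_half_pos ?_ (.of_forall fun x => ?_)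
  · exact (hG.continuous_line η).norm.div (by fun_prop) fun x => (re_exp_sub_neg hs hcos x).ne
  · rw [re_exp_sub, norm_div, norm_norm, norm_neg,
      Real.norm_of_nonneg (add_neg_cos_mul_exp_pos hs hcos x).le]
    exact hC x η (right_mem_Icc.2 hη)

lemma hasLaplace_hankel_cauchyIntegral (hG : HankelAdmissible η G) (hs : 0 < s) (hη : 0 ≤ η)
    (hcos : Real.cos η < 0) : HasLaplace (hankel η G) s (cauchyIntegral η G s) := by
  have exponent_continuous : Continuous fun x : ℝ => cexp (x + η * I) - s := by fun_prop
  have integrand (t : ℝ) : rexp (-s * t) * hankel η G t =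
      π⁻¹ * (∫ x : ℝ, cexp ((cexp (x + η * I) - s) * t) * G (x + η * I)).im := by
    rw [hankel, mul_left_comm, ← Complex.im_ofReal_mul, ← integral_const_mul]
    congr 3 with x
    rw [← mul_assoc, Complex.ofReal_exp, ← Complex.exp_add]
    push_cast
    ring_nf
  have integrable := (integrable_exp_mul_prod exponent_continuous (hG.continuous_line η)
    (re_exp_sub_neg hs hcos) (hG.integrable_norm_div_re hs hη hcos)).integral_prod_left
  have swap := integral_Ioi_integral_exp_mul exponent_continuous (hG.continuous_line η)
    (re_exp_sub_neg hs hcos) (hG.integrable_norm_div_re hs hη hcos)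
  have im_integral := integral_im integrable
  simp only [RCLike.im_to_complex, swap, neg_sub] at im_integral
  refine ⟨?_, ?_⟩ <;> simp only [integrand]
  · exact integrable.im.const_mul _
  · rw [integral_const_mul, im_integral, cauchyIntegral]

lemma cauchyIntegral_eq_zero (hG : HankelAdmissible η G) (hs : 0 < s) (hη : 0 ≤ η) (hη' : η < 2 * π)
    (hcos : Real.cos η < 0) (hlog : G (Real.log s) = 0) : cauchyIntegral η G s = 0 := by
  have hexp : (s : ℂ) - cexp (Real.log s) = 0 := by
    rw [← Complex.ofReal_exp, Real.exp_log hs, sub_self]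
  obtain ⟨H, hH, hH_eq⟩ := exists_differentiableOn_eq_div (S := Complex.im ⁻¹' Icc 0 η)
    hG.differentiable (by fun_prop : Differentiable ℂ fun w => s - cexp w) hlog hexp (by simp)
    fun w hw h => log_eq_of_exp_eq hs hw.1 (hw.2.trans_lt hη') (sub_eq_zero.1 h).symm
  obtain ⟨C, hC⟩ := hG.exists_eventually_norm_div_le hs
  have hbound : ∀ᶠ x : ℝ in cocompact ℝ, ∀ y ∈ Icc 0 η,
      ‖H (x + y * I)‖ ≤ C * rexp (-(1 / 2) * |x|) := by
    filter_upwards [hC, (isCompact_singleton (x := Real.log s)).compl_mem_cocompact]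
      with x hx hne y hy
    rw [hH_eq _ fun h => hne (by simpa using congrArg Complex.re h)]
    exact hx y hy
  have ray (x : ℝ) : H (x + η * I) = G (x + η * I) / (s - cexp (x + η * I)) := by
    refine hH_eq _ fun h => sub_exp_ne_zero hs hcos x ?_
    rw [h, hexp]
  have real_axis : ∀ᵐ x : ℝ, (H (x + (0 : ℝ) * I)).im = 0 := by
    filter_upwards [compl_mem_ae_iff.2 (measure_singleton (Real.log s))] with x hx
    rw [Complex.ofReal_zero, zero_mul, add_zero, hH_eq _ (by exact_mod_cast hx),
      ← Complex.ofReal_exp, ← Complex.ofReal_sub, Complex.div_ofReal_im, hG.im_ofReal, zero_div]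
  simp only [cauchyIntegral, ← ray]
  rw [← integral_horizontalLine_eq hη one_half_pos hH hbound, im_integral_eq_zero real_axis,
    mul_zero]

end HankelAdmissible

end CauchyIntegral

section LaplaceOfHankel

variable {η s : ℝ}

lemma cauchyIntegral_exp_half (hs : 0 < s) (hη : π / 2 < η) (hηπ : η ≤ π) :
    cauchyIntegral η (fun w => cexp ((1 / 2 : ℝ) * w)) s = s ^ (-(1 / 2) : ℝ) := by
  have hη₀ : 0 ≤ η := by linarith [Real.pi_pos]
  have hcos : Real.cos η < 0 := Real.cos_neg_of_pi_div_two_lt_of_lt hη (by linarith [Real.pi_pos])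
  have hcauchy := (HankelAdmissible.exp_half η).hasLaplace_hankel_cauchyIntegral hs hη₀ hcos
  have hrpow : HasLaplace (hankel η fun w => cexp ((1 / 2 : ℝ) * w)) s (s ^ (-(1 / 2) : ℝ)) := by
    refine (HasLaplace.rpow one_half_pos hs).congr fun t ht => ?_
    rw [hankel_exp one_half_pos ht hη hηπ]
    norm_num
  exact hcauchy.integral_eq.symm.trans hrpow.integral_eq

/- Subtracting from `G` the multiple of `exp (w / 2)` that agrees with it at `log s` makes the pole
of `G w / (s - exp w)` removable. -/
theorem HankelAdmissible.hasLaplace_hankel {G : ℂ → ℂ} (hG : HankelAdmissible η G) (hs : 0 < s)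
    (hη : π / 2 < η) (hηπ : η ≤ π) : HasLaplace (hankel η G) s ((G (Real.log s)).re / s) := by
  have hη₀ : 0 ≤ η := by linarith [Real.pi_pos]
  have hcos : Real.cos η < 0 := Real.cos_neg_of_pi_div_two_lt_of_lt hη (by linarith [Real.pi_pos])
  have hsqrt := Real.rpow_pos_of_pos hs (1 / 2)
  set c : ℝ := (G (Real.log s)).re / s ^ (1 / 2 : ℝ) with hc
  have exp_half_log : cexp ((1 / 2 : ℝ) * Real.log s) = (s ^ (1 / 2 : ℝ) : ℝ) := by
    rw [Real.rpow_def_of_pos hs, mul_comm (Real.log s)]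
    push_cast
    rfl
  have vanishing : G (Real.log s) - c * cexp ((1 / 2 : ℝ) * Real.log s) = 0 := by
    rw [exp_half_log, ← Complex.ofReal_mul, hc, div_mul_cancel₀ _ hsqrt.ne', sub_eq_zero]
    exact Complex.ext (by simp) (by simp [hG.im_ofReal])
  have hexp := HankelAdmissible.exp_half η
  have hzero := (hG.sub (hexp.const_mul c)).cauchyIntegral_eq_zero hs hη₀
    (by linarith [Real.pi_pos]) hcos vanishing
  rw [hG.cauchyIntegral_sub_const_mul hexp hs hη₀ hcos, cauchyIntegral_exp_half hs hη hηπ,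
    sub_eq_zero] at hzero
  have hvalue : cauchyIntegral η G s = (G (Real.log s)).re / s := by
    rw [hzero, hc, Real.rpow_neg hs.le, ← div_eq_mul_inv, div_div, ← Real.rpow_add hs, add_halves,
      Real.rpow_one]
  exact hvalue ▸ hG.hasLaplace_hankel_cauchyIntegral hs hη₀ hcos

end LaplaceOfHankel

section WrightSymbol

/-- The function `z * F z` at `z = exp w`, for the Laplace transform
`F z = z ^ (-δ) * (exp (-l z ^ a) - ∑_{k < N} (-l z ^ a) ^ k / k!)` of the Wright function series
`t ^ (δ - 1) * W_{-a,δ}(-l t ^ (-a))` with its first `N` terms removed. -/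
noncomputable def wrightSymbol (a δ l : ℝ) (N : ℕ) (w : ℂ) : ℂ :=
  cexp ((1 - δ : ℝ) * w) *
    (cexp (-l * cexp (a * w)) - ∑ k ∈ Finset.range N, (-l * cexp (a * w)) ^ k / (k ! : ℂ))

variable {a δ l η : ℝ} {N : ℕ}

lemma wrightSymbol_ofReal (a δ l : ℝ) (N : ℕ) (x : ℝ) :
    wrightSymbol a δ l N x = (rexp ((1 - δ) * x) * (rexp (-l * rexp (a * x)) -
      ∑ k ∈ Finset.range N, (-l * rexp (a * x)) ^ k / (k ! : ℝ)) : ℝ) := by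
  unfold wrightSymbol
  push_cast
  rfl

lemma re_wrightSymbol_log {s : ℝ} (hs : 0 < s) (a δ l : ℝ) (N : ℕ) :
    (wrightSymbol a δ l N (Real.log s)).re =
      s ^ (1 - δ) * (rexp (-l * s ^ a) - ∑ k ∈ Finset.range N, (-l * s ^ a) ^ k / (k ! : ℝ)) := by
  rw [wrightSymbol_ofReal, Complex.ofReal_re]
  simp only [Real.rpow_def_of_pos hs, mul_comm (Real.log s)]

lemma norm_neg_mul_exp_mul_add_mul_I (hl : 0 ≤ l) (a x y : ℝ) :
    ‖-(l : ℂ) * cexp (a * (x + y * I))‖ = l * rexp (a * x) := by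
  rw [norm_mul, norm_exp_mul_add_mul_I, norm_neg, Complex.norm_of_nonneg hl]

lemma norm_wrightSymbol_le_of_nonpos (ha : 0 ≤ a) (hl : 0 ≤ l) (hN : δ - 1 / 2 ≤ a * N)
    {x : ℝ} (hx : x ≤ 0) (y : ℝ) :
    ‖wrightSymbol a δ l N (x + y * I)‖ ≤ l ^ N * rexp l * rexp (x / 2) := by
  have hexp_le : l * rexp (a * x) ≤ l :=
    mul_le_of_le_one_right hl (Real.exp_le_one_iff.2 (mul_nonpos_of_nonneg_of_nonpos ha hx))
  have remainder := Complex.norm_exp_sub_sum_le_norm_mul_exp (-(l : ℂ) * cexp (a * (x + y * I))) N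
  rw [norm_neg_mul_exp_mul_add_mul_I hl] at remainder
  rw [wrightSymbol, norm_mul, norm_exp_mul_add_mul_I]
  calc _ ≤ rexp ((1 - δ) * x) * ((l * rexp (a * x)) ^ N * rexp (l * rexp (a * x))) := by gcongr
    _ ≤ rexp ((1 - δ) * x) * ((l * rexp (a * x)) ^ N * rexp l) := by gcongr
    _ = l ^ N * rexp l * rexp ((1 - δ + a * N) * x) := by
      rw [mul_pow, ← Real.exp_nat_mul, add_mul, Real.exp_add]
      ring_nf
    _ ≤ l ^ N * rexp l * rexp (x / 2) := by
      gcongr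
      nlinarith

lemma exists_mul_le_add_mul_exp {a b : ℝ} (ha : 0 < a) (hb : 0 < b) (m : ℝ) :
    ∃ K, ∀ x, 0 ≤ x → m * x ≤ K + b * rexp (a * x) := by
  refine ⟨m ^ 2 / (2 * b * a ^ 2), fun x hx => ?_⟩
  have hquad := Real.quadratic_le_exp_of_nonneg (mul_nonneg ha.le hx)
  have hsq : m * x ≤ m ^ 2 / (2 * b * a ^ 2) + b * ((a * x) ^ 2 / 2) := by
    rw [← sub_nonneg]
    have : m ^ 2 / (2 * b * a ^ 2) + b * ((a * x) ^ 2 / 2) - m * x =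
        (m - b * a ^ 2 * x) ^ 2 / (2 * b * a ^ 2) := by
      field_simp
      ring
    rw [this]
    positivity
  have : b * ((a * x) ^ 2 / 2) ≤ b * rexp (a * x) := by
    gcongr
    linarith [mul_nonneg ha.le hx]
  linarith

lemma norm_exp_neg_mul_exp_le (ha : 0 ≤ a) (hl : 0 ≤ l) (hη : a * η ≤ π) (x : ℝ) {y : ℝ}
    (hy : y ∈ Icc 0 η) :
    ‖cexp (-l * cexp (a * (x + y * I)))‖ ≤ rexp (-(l * Real.cos (a * η) * rexp (a * x))) := by
  have hcos : Real.cos (a * η) ≤ Real.cos (a * y) :=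
    Real.cos_le_cos_of_nonneg_of_le_pi (mul_nonneg ha hy.1) hη (by gcongr; exact hy.2)
  have hnorm := norm_exp_mul_exp_add_mul_I (-l) (a * x) (a * y)
  push_cast at hnorm
  rw [mul_add, ← mul_assoc (a : ℂ) y, hnorm, neg_mul, neg_mul]
  gcongr

lemma exists_norm_wrightSymbol_le_of_nonneg (ha : 0 < a) (hl : 0 < l) (hη : 0 ≤ η)
    (haη : a * η < π / 2) (hN : ∀ k < N, a * k ≤ δ - 1 / 2) :
    ∃ C, ∀ x : ℝ, 0 ≤ x → ∀ y ∈ Icc 0 η, ‖wrightSymbol a δ l N (x + y * I)‖ ≤ C * rexp (x / 2) := by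
  have hcos : 0 < Real.cos (a * η) :=
    Real.cos_pos_of_mem_Ioo ⟨by linarith [mul_nonneg ha.le hη, Real.pi_pos], haη⟩
  obtain ⟨K, hK⟩ := exists_mul_le_add_mul_exp ha (mul_pos hl hcos) (1 / 2 - δ)
  refine ⟨rexp K + ∑ k ∈ Finset.range N, l ^ k / (k ! : ℝ), fun x hx y hy => ?_⟩
  have exponential : rexp ((1 - δ) * x) * ‖cexp (-l * cexp (a * (x + y * I)))‖ ≤
      rexp K * rexp (x / 2) :=
    calc _ ≤ rexp ((1 - δ) * x) * rexp (-(l * Real.cos (a * η) * rexp (a * x))) := by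
          gcongr
          exact norm_exp_neg_mul_exp_le ha.le hl.le (by linarith [Real.pi_pos]) x hy
      _ ≤ rexp K * rexp (x / 2) := by
          rw [← Real.exp_add, ← Real.exp_add, Real.exp_le_exp]
          linarith [hK x hx]
  have monomial (k : ℕ) (hk : k < N) : rexp ((1 - δ) * x) *
      ‖(-(l : ℂ) * cexp (a * (x + y * I))) ^ k / (k ! : ℂ)‖ ≤ l ^ k / (k ! : ℝ) * rexp (x / 2) :=
    calc _ = l ^ k / (k ! : ℝ) * rexp ((1 - δ + a * k) * x) := by
          rw [norm_div, norm_pow, norm_neg_mul_exp_mul_add_mul_I hl.le, Complex.norm_natCast,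
            mul_pow, ← Real.exp_nat_mul, add_mul, Real.exp_add]
          ring_nf
      _ ≤ l ^ k / (k ! : ℝ) * rexp (x / 2) := by
          gcongr
          nlinarith [hN k hk]
  rw [wrightSymbol, norm_mul, norm_exp_mul_add_mul_I, add_mul, Finset.sum_mul]
  refine (mul_le_mul_of_nonneg_left (norm_sub_le _ _) (Real.exp_pos _).le).trans ?_
  rw [mul_add]
  refine add_le_add exponential ?_
  refine (mul_le_mul_of_nonneg_left (norm_sum_le _ _) (Real.exp_pos _).le).trans ?_
  rw [Finset.mul_sum]
  exact Finset.sum_le_sum fun k hk => monomial k (Finset.mem_range.1 hk)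

lemma hankelAdmissible_wrightSymbol (ha : 0 < a) (hl : 0 < l) (hη : 0 ≤ η) (haη : a * η < π / 2)
    (hN : δ - 1 / 2 ≤ a * N) (hN' : ∀ k < N, a * k ≤ δ - 1 / 2) :
    HankelAdmissible η (wrightSymbol a δ l N) where
  differentiable := by
    unfold wrightSymbol
    fun_prop
  im_ofReal x := by rw [wrightSymbol_ofReal, Complex.ofReal_im]
  isBigO := by
    obtain ⟨C, hC⟩ := exists_norm_wrightSymbol_le_of_nonneg ha hl hη haη hN'
    refine .of_bound (max (l ^ N * rexp l) C) (eventually_principal.2 ?_)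
    rintro ⟨x, y⟩ hy
    rw [Real.norm_of_nonneg (Real.exp_pos _).le, Complex.mk_eq_add_mul_I]
    rcases le_total x 0 with hx | hx
    · refine (norm_wrightSymbol_le_of_nonpos ha.le hl.le hN hx y).trans ?_
      gcongr
      exacts [le_max_left _ _, by simp]
    · refine (hC x hx y hy).trans ?_
      gcongr
      exacts [le_max_right _ _, by simp]

end WrightSymbol

section WrightSeries

/-- The `k`-th term of the series `t ^ (δ - 1) * W_{-a,δ}(-l t ^ (-a))`, which is `0` where
`δ - a * k` is a pole of `Γ`. -/
noncomputable def wrightTerm (a δ l : ℝ) (k : ℕ) (t : ℝ) : ℝ :=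
  (-l) ^ k / (k ! : ℝ) * (t ^ (δ - a * k - 1) / Real.Gamma (δ - a * k))

/-- The `k`-th term of the expansion of `wrightSymbol a δ l 0` in powers of `exp (a * w)`; its
Hankel integral, where it converges, is `wrightTerm a δ l k`. -/
noncomputable def wrightSymbolTerm (a δ l : ℝ) (k : ℕ) (w : ℂ) : ℂ :=
  ((-l) ^ k / (k ! : ℝ) : ℝ) * cexp ((1 - δ + a * k : ℝ) * w)

variable {a δ l η s t : ℝ} {N : ℕ}

lemma rpow_mul_wright (ht : 0 < t) (a δ l : ℝ) :
    t ^ (δ - 1) * wright (-a) δ (-l * t ^ (-a)) = ∑' k, wrightTerm a δ l k t := by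
  rw [wright, ← tsum_mul_left]
  refine tsum_congr fun k => ?_
  have hpow : t ^ (δ - a * k - 1) = t ^ (δ - 1) * (t ^ (-a)) ^ k := by
    rw [← Real.rpow_mul_natCast ht.le, ← Real.rpow_add ht]
    ring_nf
  rw [wrightTerm, hpow, mul_pow, neg_mul, neg_add_eq_sub]
  ring

lemma hasLaplace_wrightTerm {k : ℕ} (hk : a * k < δ) (hs : 0 < s) :
    HasLaplace (wrightTerm a δ l k) s ((-l) ^ k / (k ! : ℝ) * s ^ (-(δ - a * k))) :=
  (HasLaplace.rpow (sub_pos.2 hk) hs).const_mul _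

lemma hankel_const_mul (c η : ℝ) (G : ℂ → ℂ) (t : ℝ) :
    hankel η (fun w => c * G w) t = c * hankel η G t := by
  simp only [hankel, mul_left_comm _ (c : ℂ)]
  rw [integral_const_mul, Complex.im_ofReal_mul, mul_left_comm]

lemma hasSum_hankel {F : ℕ → ℂ → ℂ} {G : ℂ → ℂ} {B : ℕ → ℝ → ℝ} (hF : ∀ k, Continuous (F k))
    (hB : ∀ k x, rexp (t * Real.cos η * rexp x) * ‖F k (x + η * I)‖ ≤ B k x)
    (summable : ∀ x, Summable fun k => B k x) (integrable : Integrable fun x => ∑' k, B k x)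
    (hsum : ∀ x : ℝ, HasSum (fun k => F k (x + η * I)) (G (x + η * I))) :
    HasSum (fun k => hankel η (F k) t) (hankel η G t) := by
  have integral_sum := hasSum_integral_of_dominated_convergence (μ := volume)
    (F := fun k (x : ℝ) => cexp (t * cexp (x + η * I)) * F k (x + η * I)) B
    (fun k => (by fun_prop : Continuous _).aestronglyMeasurable)
    (fun k => .of_forall fun x => by
      rw [norm_mul, norm_exp_mul_exp_add_mul_I]
      exact hB k x)
    (.of_forall summable) integrable (.of_forall fun x => (hsum x).mul_left _)
  exact (Complex.imCLM.hasSum integral_sum).mul_left π⁻¹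

lemma hasSum_pow_div_factorial (x : ℝ) : HasSum (fun k => x ^ k / (k ! : ℝ)) (rexp x) := by
  rw [Real.exp_eq_exp_ℝ]
  exact NormedSpace.expSeries_div_hasSum_exp x

lemma hasSum_exp_sub_sum (z : ℂ) (N : ℕ) :
    HasSum (fun k => z ^ (k + N) / ((k + N)! : ℂ))
      (cexp z - ∑ k ∈ Finset.range N, z ^ k / (k ! : ℂ)) := by
  refine (hasSum_nat_add_iff' N).2 ?_
  rw [Complex.exp_eq_exp_ℂ]
  exact NormedSpace.expSeries_div_hasSum_exp z

lemma hasSum_wrightSymbolTerm (a δ l : ℝ) (N : ℕ) (w : ℂ) :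
    HasSum (fun k => wrightSymbolTerm a δ l (k + N) w) (wrightSymbol a δ l N w) := by
  refine ((hasSum_exp_sub_sum (-l * cexp (a * w)) N).mul_left
    (cexp ((1 - δ : ℝ) * w))).congr_fun fun k => ?_
  rw [wrightSymbolTerm, mul_pow, ← Complex.exp_nat_mul, Complex.ofReal_add, add_mul,
    Complex.exp_add]
  push_cast
  ring_nf

lemma hankel_wrightSymbolTerm {k : ℕ} (hk : δ - 1 < a * k) (ht : 0 < t) (hη : π / 2 < η)
    (hηπ : η ≤ π) : hankel η (wrightSymbolTerm a δ l k) t = wrightTerm a δ l k t := by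
  unfold wrightSymbolTerm
  rw [hankel_const_mul, hankel_exp (by linarith) ht hη hηπ, wrightTerm]
  ring_nf

lemma norm_wrightSymbolTerm_add_le (a δ l : ℝ) (k N : ℕ) (x y : ℝ) :
    ‖wrightSymbolTerm a δ l (k + N) (x + y * I)‖ ≤
      |l| ^ N * rexp ((1 - δ + a * N) * x) * ((|l| * rexp (a * x)) ^ k / (k ! : ℝ)) := by
  have hfactorial : (k ! : ℝ) ≤ (k + N)! := by
    exact_mod_cast Nat.factorial_le (Nat.le_add_right k N)
  rw [wrightSymbolTerm, norm_mul, norm_exp_mul_add_mul_I, Complex.norm_real, norm_div, norm_pow,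
    norm_neg, Real.norm_eq_abs, Real.norm_natCast]
  calc |l| ^ (k + N) / ((k + N)! : ℝ) * rexp ((1 - δ + a * (k + N : ℕ)) * x)
      ≤ |l| ^ (k + N) / (k ! : ℝ) * rexp ((1 - δ + a * (k + N : ℕ)) * x) := by gcongr
    _ = |l| ^ N * rexp ((1 - δ + a * N) * x) * ((|l| * rexp (a * x)) ^ k / (k ! : ℝ)) := by
      have hexp : rexp ((1 - δ + a * (k + N : ℕ)) * x) =
          rexp ((1 - δ + a * N) * x) * rexp (a * x) ^ k := by
        rw [← Real.exp_nat_mul, ← Real.exp_add]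
        push_cast
        ring_nf
      rw [hexp, mul_pow]
      ring

/- `(k + N)! ≥ k!` leaves the factor `exp (|l| e ^ (a x))`, which is absorbed by the doubly
exponential decay of `exp (t z)` along the ray because `a < 1`. -/
lemma hasSum_wrightTerm (ha : 0 < a) (ha1 : a < 1) (hN : δ - 1 < a * N) (ht : 0 < t)
    (hη : π / 2 < η) (hηπ : η ≤ π) :
    HasSum (fun k => wrightTerm a δ l (k + N) t) (hankel η (wrightSymbol a δ l N) t) := by
  have hcos : Real.cos η < 0 := Real.cos_neg_of_pi_div_two_lt_of_lt hη (by linarith [Real.pi_pos])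
  have hμ : 0 < 1 - δ + a * N := by linarith
  let M (x : ℝ) : ℝ := rexp (t * Real.cos η * rexp x) * (|l| ^ N * rexp ((1 - δ + a * N) * x))
  have exp_series (x : ℝ) : HasSum (fun k => M x * ((|l| * rexp (a * x)) ^ k / (k ! : ℝ)))
      (M x * rexp (|l| * rexp (a * x))) :=
    (hasSum_pow_div_factorial (|l| * rexp (a * x))).mul_left (M x)
  have integrable : Integrable fun x => M x * rexp (|l| * rexp (a * x)) := by
    refine integrable_of_norm_le_exp_neg_mul_abs (C := |l| ^ N * rexp |(|l|)|) hμ (by fun_prop) ?_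
    filter_upwards [eventually_exp_le_exp_neg_mul_abs ha ha1
      (neg_pos.2 (mul_neg_of_pos_of_neg ht hcos)) |l| (1 - δ + a * N)] with x hx
    rw [Real.norm_of_nonneg (by positivity), mul_assoc (|l| ^ N)]
    refine le_of_eq_of_le ?_ (mul_le_mul_of_nonneg_left hx (by positivity))
    rw [neg_mul, sub_neg_eq_add, Real.exp_add, Real.exp_add]
    ring
  have term_bound (k : ℕ) (x : ℝ) :
      rexp (t * Real.cos η * rexp x) * ‖wrightSymbolTerm a δ l (k + N) (x + η * I)‖ ≤
        M x * ((|l| * rexp (a * x)) ^ k / (k ! : ℝ)) := by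
    rw [mul_assoc (rexp _)]
    gcongr
    exact norm_wrightSymbolTerm_add_le a δ l k N x η
  have symbolTerm_continuous (k : ℕ) : Continuous (wrightSymbolTerm a δ l (k + N)) := by
    unfold wrightSymbolTerm
    fun_prop
  have hsum := hasSum_hankel symbolTerm_continuous term_bound
    (fun x => (exp_series x).summable) (by simpa only [(exp_series _).tsum_eq] using integrable)
    fun x => hasSum_wrightSymbolTerm a δ l N (x + η * I)
  refine hsum.congr_fun fun k => (hankel_wrightSymbolTerm ?_ ht hη hηπ).symm
  push_cast
  linarith [mul_nonneg ha.le (Nat.cast_nonneg (α := ℝ) k)]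

end WrightSeries

section WrightLaplace

variable {a δ l s : ℝ}

lemma rpow_mul_wright_eq_sum_add_hankel {η t : ℝ} {N : ℕ} (ha : 0 < a) (ha1 : a < 1)
    (hN : δ - 1 < a * N) (ht : 0 < t) (hη : π / 2 < η) (hηπ : η ≤ π) :
    t ^ (δ - 1) * wright (-a) δ (-l * t ^ (-a)) =
      ∑ k ∈ Finset.range N, wrightTerm a δ l k t + hankel η (wrightSymbol a δ l N) t := by
  rw [rpow_mul_wright ht, add_comm]
  exact ((hasSum_nat_add_iff (f := fun k => wrightTerm a δ l k t) N).1
    (hasSum_wrightTerm ha ha1 hN ht hη hηπ)).tsum_eq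

lemma sum_add_re_wrightSymbol_log_div (hs : 0 < s) (a δ l : ℝ) (N : ℕ) :
    ∑ k ∈ Finset.range N, (-l) ^ k / (k ! : ℝ) * s ^ (-(δ - a * k)) +
      (wrightSymbol a δ l N (Real.log s)).re / s = s ^ (-δ) * rexp (-l * s ^ a) := by
  have monomial (k : ℕ) : (-l) ^ k / (k ! : ℝ) * s ^ (-(δ - a * k)) =
      s ^ (-δ) * ((-l * s ^ a) ^ k / (k ! : ℝ)) := by
    rw [neg_sub, sub_eq_neg_add, Real.rpow_add hs, Real.rpow_mul_natCast hs.le, mul_pow]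
    ring
  have hpow : s ^ (1 - δ) = s * s ^ (-δ) := by
    rw [sub_eq_add_neg, Real.rpow_add hs, Real.rpow_one]
  simp only [monomial, ← Finset.mul_sum]
  rw [re_wrightSymbol_log hs, hpow]
  field_simp
  ring

lemma exists_hankel_angle (ha : 0 < a) (ha1 : a < 1) :
    ∃ η, π / 2 < η ∧ η ≤ π ∧ a * η < π / 2 := by
  have hlt : π / 2 < π / 2 / a :=
    (lt_div_iff₀ ha).2 (mul_lt_of_lt_one_right Real.pi_div_two_pos ha1)
  obtain ⟨η, hη, hη'⟩ := exists_between (lt_min (half_lt_self Real.pi_pos) hlt)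
  obtain ⟨hηπ, hηa⟩ := lt_min_iff.1 hη'
  exact ⟨η, hη, hηπ.le, (lt_div_iff₀' ha).1 hηa⟩

lemma exists_truncation (ha : 0 < a) (b : ℝ) : ∃ N : ℕ, b ≤ a * N ∧ ∀ k < N, a * k ≤ b := by
  refine ⟨⌈b / a⌉₊, (div_le_iff₀' ha).1 (Nat.le_ceil _), fun k hk => ?_⟩
  exact (le_div_iff₀' ha).1 (Nat.lt_ceil.1 hk).le

theorem hasLaplace_wright (ha : 0 < a) (ha1 : a < 1) (hl : 0 < l) (hs : 0 < s) :
    HasLaplace (fun t => t ^ (δ - 1) * wright (-a) δ (-l * t ^ (-a))) s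
      (s ^ (-δ) * rexp (-l * s ^ a)) := by
  obtain ⟨η, hη, hηπ, haη⟩ := exists_hankel_angle ha ha1
  obtain ⟨N, hN, hN'⟩ := exists_truncation ha (δ - 1 / 2)
  have initial_terms : HasLaplace (fun t => ∑ k ∈ Finset.range N, wrightTerm a δ l k t) s
      (∑ k ∈ Finset.range N, (-l) ^ k / (k ! : ℝ) * s ^ (-(δ - a * k))) :=
    .sum fun k hk => hasLaplace_wrightTerm (by linarith [hN' k (Finset.mem_range.1 hk)]) hs
  have remainder := (hankelAdmissible_wrightSymbol ha hl (by linarith [Real.pi_pos]) haη hN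
    hN').hasLaplace_hankel hs hη hηπ
  rw [← sum_add_re_wrightSymbol_log_div hs a δ l N]
  exact (initial_terms.add remainder).congr fun t ht =>
    (rpow_mul_wright_eq_sum_add_hankel ha ha1 (by linarith) ht hη hηπ).symm

end WrightLaplace

/-- For `−1 < γ < 0`, `λ > 0`, `δ ∈ ℝ`, the function `t ↦ t^{δ−1}·W_{γ,δ}(−λt^γ)` has
Laplace transform `s^{−δ}·exp(−λs^{−γ})` for `s > 0`. -/
theorem wright_laplace (γ δ lam : ℝ) (hγ₁ : -1 < γ) (hγ₂ : γ < 0) (hlam : 0 < lam)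
    (s : ℝ) (hs : 0 < s) :
    ∫ t in Set.Ioi (0 : ℝ), Real.exp (-s * t) * (t ^ (δ - 1) * wright γ δ (-lam * t ^ γ))
      = s ^ (-δ) * Real.exp (-lam * s ^ (-γ)) := by
  simpa only [neg_neg] using
    (hasLaplace_wright (δ := δ) (neg_pos.2 hγ₂) (neg_lt.1 hγ₁) hlam hs).integral_eq
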